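/- Distributional bilaplacian identity in dimension three: Let n = 3, M ≥ 1, R > 0, and let u ∈ C_c^∞(ℝ³; ℂ). Then ∫_{ℝ³} ∇(Δφ_R)(x)·∇(|u(x)|²) dx = (1/R³) ∫_{|x|<R} |u(x)|² dx + 8πM·|u(0)|². -/

import Mathlib

/-!
Off the null set `{0} ∪ {|x| = R}`, the gradient of the radial function `Δφ_R` is
`-G(|x|) x / |x|³` with `G(r) = 2M + min(r, R)³ / (3R³)`. Pairing it with `∇v` and passing to polar
coordinates, the volume factor `r²` cancels the singularity, and the integral along the ray
through a unit vector `ω` is `-∫₀^∞ G(r) (d/dr) v(rω) dr`. Since `G` is continuous on `[0, ∞)`, its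
corner at `r = R` contributes nothing and integration by parts gives
`G(0) v(0) + ∫₀^∞ G'(r) v(rω) dr`. Integrating over `ω`, `G(0) = 2M` times the area `4π` of the
sphere is the point mass, and `G'(r) = r²/R³` on `(0, R)`, `G' = 0` beyond `R`, turns the second
term into `R⁻³ ∫_{|x| < R} v`. In any dimension `d` the same computation integrates by parts
against the field `G(|x|) x / |x|ᵈ`, the point mass being `G(0)` times the area of the unit sphere.
-/

open MeasureTheory
open scoped BigOperators

noncomputable section

/-- The partial derivative `∂ₖ f` of a real-valued function. -/
noncomputable def pdR {n : ℕ} (f : EuclideanSpace ℝ (Fin n) → ℝ) (k : Fin n)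
    (x : EuclideanSpace ℝ (Fin n)) : ℝ :=
  fderiv ℝ f x (EuclideanSpace.single k 1)

/-- The Laplacian `Δf = Σₖ ∂ₖ∂ₖ f` of a real-valued function. -/
noncomputable def lap {n : ℕ} (f : EuclideanSpace ℝ (Fin n) → ℝ)
    (x : EuclideanSpace ℝ (Fin n)) : ℝ :=
  ∑ k, pdR (pdR f k) k x

/-- The derivative `φ₀'` of the basic radial multiplier. -/
noncomputable def gmult (n : ℕ) (M : ℝ) (r : ℝ) : ℝ :=
  if r ≤ 1 then M + r / (2 * n) - r ^ 3 / (2 * n * (n + 2))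
  else M + 1 / (2 * n) - 1 / (2 * n * (n + 2) * r ^ (n - 1))

/-- The basic radial multiplier `φ₀(r) = ∫₀ʳ φ₀'(s) ds`. -/
noncomputable def phi0 (n : ℕ) (M : ℝ) (r : ℝ) : ℝ :=
  ∫ s in (0:ℝ)..r, gmult n M s

/-- The scaled multiplier `φ_R(x) = R φ₀(|x|/R)`. -/
noncomputable def phiR (n : ℕ) (M R : ℝ) (x : EuclideanSpace ℝ (Fin n)) : ℝ :=
  R * phi0 n M (‖x‖ / R)

section RadialCalculus

open Topology

variable {E : Type*} [NormedAddCommGroup E] [InnerProductSpace ℝ E]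

lemma hasFDerivAt_norm {x : E} (hx : x ≠ 0) :
    HasFDerivAt (fun y : E => ‖y‖) (‖x‖⁻¹ • innerSL ℝ x) x := by
  have hsqrt := (hasStrictFDerivAt_norm_sq x).hasFDerivAt.sqrt (by positivity)
  simp only [Real.sqrt_sq (norm_nonneg _)] at hsqrt
  refine hsqrt.congr_fderiv ?_
  ext y
  simp only [one_div, mul_inv_rev, smul_apply, coe_innerSL_apply, nsmul_eq_mul, Nat.cast_ofNat,
    smul_eq_mul]
  field_simp

lemma hasFDerivAt_comp_norm {f : ℝ → ℝ} {f' : ℝ} {x : E} (hx : x ≠ 0)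
    (hf : HasDerivAt f f' ‖x‖) :
    HasFDerivAt (fun y : E => f ‖y‖) ((f' / ‖x‖) • innerSL ℝ x) x := by
  simpa only [Function.comp_def, smul_smul, div_eq_mul_inv] using
    hf.comp_hasFDerivAt x (hasFDerivAt_norm hx)

variable {n : ℕ} {x : EuclideanSpace ℝ (Fin n)}

lemma pdR_comp_norm {f : ℝ → ℝ} {f' : ℝ} (hx : x ≠ 0) (hf : HasDerivAt f f' ‖x‖) (k : Fin n) :
    pdR (fun y => f ‖y‖) k x = f' / ‖x‖ * x k := by
  rw [pdR, (hasFDerivAt_comp_norm hx hf).fderiv]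
  simp [EuclideanSpace.inner_single_right]

lemma pdR_comp_norm_mul_coord {a : ℝ → ℝ} {a' : ℝ} (hx : x ≠ 0) (ha : HasDerivAt a a' ‖x‖)
    (k : Fin n) :
    pdR (fun y => a ‖y‖ * y k) k x = a ‖x‖ + a' / ‖x‖ * x k ^ 2 := by
  have hmul : HasFDerivAt (fun y : EuclideanSpace ℝ (Fin n) => a ‖y‖ * y k) _ x :=
    (hasFDerivAt_comp_norm hx ha).mul (EuclideanSpace.proj (𝕜 := ℝ) k).hasFDerivAt
  rw [pdR, hmul.fderiv]
  simp only [add_apply, smul_apply, PiLp.proj_apply, PiLp.single_eq_same, smul_eq_mul, mul_one,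
    coe_innerSL_apply, EuclideanSpace.inner_single_right, Real.ringHom_apply, one_mul]
  ring

lemma sum_mul_pdR (f : EuclideanSpace ℝ (Fin n) → ℝ) (x y : EuclideanSpace ℝ (Fin n)) :
    ∑ k, y k * pdR f k x = fderiv ℝ f x y := by
  conv_rhs => rw [← (EuclideanSpace.basisFun (Fin n) ℝ).sum_repr y, map_sum]
  simp [pdR]

lemma pdR_congr_of_eventuallyEq {f g : EuclideanSpace ℝ (Fin n) → ℝ} (h : f =ᶠ[𝓝 x] g)
    (k : Fin n) : pdR f k x = pdR g k x := by
  rw [pdR, pdR, h.fderiv_eq]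

lemma lap_comp_norm {f f' : ℝ → ℝ} {f'' : ℝ} (hx : x ≠ 0)
    (hf : ∀ᶠ r in 𝓝 ‖x‖, HasDerivAt f (f' r) r) (hf' : HasDerivAt f' f'' ‖x‖) :
    lap (fun y => f ‖y‖) x = f'' + (n - 1) / ‖x‖ * f' ‖x‖ := by
  have hx' : ‖x‖ ≠ 0 := norm_ne_zero_iff.2 hx
  have hquot : HasDerivAt (fun r => f' r / r) ((f'' * ‖x‖ - f' ‖x‖ * 1) / ‖x‖ ^ 2) ‖x‖ :=
    hf'.div (hasDerivAt_id _) hx'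
  have hgrad (k : Fin n) :
      pdR (fun y : EuclideanSpace ℝ (Fin n) => f ‖y‖) k =ᶠ[𝓝 x]
        fun y => f' ‖y‖ / ‖y‖ * y k := by
    filter_upwards [continuous_norm.continuousAt.eventually hf, isOpen_ne.mem_nhds hx]
      with y hfy hy using pdR_comp_norm hy hfy k
  simp only [lap, pdR_congr_of_eventuallyEq (hgrad _), pdR_comp_norm_mul_coord hx hquot,
    Finset.sum_add_distrib, ← Finset.mul_sum, ← EuclideanSpace.real_norm_sq_eq]
  simp only [Finset.sum_const, Finset.card_univ, Fintype.card_fin, nsmul_eq_mul, mul_one]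
  field_simp
  ring

end RadialCalculus

section Multiplier

open Set Topology

lemma continuous_gmult (n : ℕ) (M : ℝ) : Continuous (gmult n M) := by
  refine continuous_if_le continuous_id continuous_const (by fun_prop) ?_ ?_
  · simp only [one_div, mul_inv]
    have hpow : ∀ r ∈ {r : ℝ | 1 ≤ id r}, r ^ (n - 1) ≠ 0 := fun r hr =>
      pow_ne_zero _ (one_pos.trans_le hr).ne'
    fun_prop (disch := assumption)
  · rintro r rfl
    simp

lemma hasDerivAt_phi0 (n : ℕ) (M r : ℝ) : HasDerivAt (phi0 n M) (gmult n M r) r :=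
  ((continuous_gmult n M).integral_hasStrictDerivAt 0 r).hasDerivAt

lemma gmult_eventuallyEq_of_lt_one (n : ℕ) (M : ℝ) {r : ℝ} (hr : r < 1) :
    gmult n M =ᶠ[𝓝 r] fun s => M + s / (2 * n) - s ^ 3 / (2 * n * (n + 2)) := by
  filter_upwards [Iio_mem_nhds hr] with s hs using if_pos hs.le

lemma gmult_eventuallyEq_of_one_lt (n : ℕ) (M : ℝ) {r : ℝ} (hr : 1 < r) :
    gmult n M =ᶠ[𝓝 r] fun s => M + 1 / (2 * n) - 1 / (2 * n * (n + 2) * s ^ (n - 1)) := by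
  filter_upwards [Ioi_mem_nhds hr] with s hs using if_neg hs.not_ge

lemma hasDerivAt_gmult_of_lt_one (n : ℕ) (M : ℝ) {r : ℝ} (hr : r < 1) :
    HasDerivAt (gmult n M) (1 / (2 * n) - 3 * r ^ 2 / (2 * n * (n + 2))) r := by
  refine HasDerivAt.congr_of_eventuallyEq ?_ (gmult_eventuallyEq_of_lt_one n M hr)
  simpa using (((hasDerivAt_id r).div_const (2 * n : ℝ)).const_add M).fun_sub
    ((hasDerivAt_pow 3 r).div_const (2 * n * (n + 2) : ℝ))

lemma hasDerivAt_gmult_of_one_lt (n : ℕ) (M : ℝ) {r : ℝ} (hr : 1 < r) :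
    HasDerivAt (gmult n M) ((n - 1) / (2 * n * (n + 2) * r ^ n)) r := by
  have hr0 : r ≠ 0 := (one_pos.trans hr).ne'
  refine HasDerivAt.congr_of_eventuallyEq ?_ (gmult_eventuallyEq_of_one_lt n M hr)
  rcases n with _ | _ | n
  · simpa using hasDerivAt_const r M
  · simpa using hasDerivAt_const r (M + 2⁻¹ - 3⁻¹ * 2⁻¹)
  · have hinv : HasDerivAt (fun s : ℝ => (s ^ (n + 1))⁻¹) _ r :=
      (hasDerivAt_pow (n + 1) r).fun_inv (pow_ne_zero _ hr0)
    simp only [one_div, mul_inv]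
    refine ((hinv.const_mul _).const_sub _).congr_deriv ?_
    simp only [Nat.cast_add, Nat.cast_one, add_tsub_cancel_right]
    field_simp
    ring

variable {n : ℕ} (M : ℝ) {R : ℝ} {x : EuclideanSpace ℝ (Fin n)}

lemma lap_phiR {g' : ℝ} (hR : R ≠ 0) (hx : x ≠ 0) (hg : HasDerivAt (gmult n M) g' (‖x‖ / R)) :
    lap (phiR n M R) x = g' / R + (n - 1) / ‖x‖ * gmult n M (‖x‖ / R) := by
  have hscale (r : ℝ) : HasDerivAt (fun s => s / R) (1 / R) r := (hasDerivAt_id r).div_const R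
  have hphi (r : ℝ) : HasDerivAt (fun s => R * phi0 n M (s / R)) (gmult n M (r / R)) r := by
    refine (((hasDerivAt_phi0 n M (r / R)).comp r (hscale r)).const_mul R).congr_deriv ?_
    field_simp
  have hgmult : HasDerivAt (fun s => gmult n M (s / R)) (g' / R) ‖x‖ :=
    (HasDerivAt.comp (h₂ := gmult n M) ‖x‖ hg (hscale ‖x‖)).congr_deriv (mul_one_div g' R)
  exact lap_comp_norm hx (.of_forall hphi) hgmult

lemma natCast_ne_zero_of_euclideanSpace_ne_zero (hx : x ≠ 0) : (n : ℝ) ≠ 0 := by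
  rintro h
  obtain rfl : n = 0 := by exact_mod_cast h
  exact hx (Subsingleton.elim x 0)

lemma lap_phiR_of_norm_lt (hx : x ≠ 0) (hxR : ‖x‖ < R) :
    lap (phiR n M R) x
      = (n - 1) * M / ‖x‖ + 1 / (2 * R) - ‖x‖ ^ 2 / (2 * n * R ^ 3) := by
  have hx' : 0 < ‖x‖ := norm_pos_iff.2 hx
  have hR : 0 < R := hx'.trans hxR
  have hn := natCast_ne_zero_of_euclideanSpace_ne_zero hx
  have hlt : ‖x‖ / R < 1 := (div_lt_one hR).2 hxR
  rw [lap_phiR M hR.ne' hx (hasDerivAt_gmult_of_lt_one n M hlt),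
    (gmult_eventuallyEq_of_lt_one n M hlt).eq_of_nhds]
  field_simp
  ring

lemma lap_phiR_of_lt_norm (hR : 0 < R) (hxR : R < ‖x‖) :
    lap (phiR n M R) x = (n - 1) * (M + 1 / (2 * n)) / ‖x‖ := by
  have hx' : 0 < ‖x‖ := hR.trans hxR
  have hx : x ≠ 0 := norm_pos_iff.1 hx'
  have hn := natCast_ne_zero_of_euclideanSpace_ne_zero hx
  have hlt : 1 < ‖x‖ / R := (one_lt_div hR).2 hxR
  rw [lap_phiR M hR.ne' hx (hasDerivAt_gmult_of_one_lt n M hlt),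
    (gmult_eventuallyEq_of_one_lt n M hlt).eq_of_nhds]
  obtain ⟨m, rfl⟩ : ∃ m, n = m + 1 := Nat.exists_eq_succ_of_ne_zero (by exact_mod_cast hn)
  simp only [Nat.add_sub_cancel, div_pow]
  field_simp
  ring

lemma pdR_lap_phiR_of_norm_lt (hx : x ≠ 0) (hxR : ‖x‖ < R) (k : Fin n) :
    pdR (lap (phiR n M R)) k x
      = -((n - 1) * M / ‖x‖ ^ 2 + ‖x‖ / (n * R ^ 3)) / ‖x‖ * x k := by
  have hx' : ‖x‖ ≠ 0 := norm_ne_zero_iff.2 hx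
  have hlap : lap (phiR n M R) =ᶠ[𝓝 x]
      fun y => (n - 1) * M / ‖y‖ + 1 / (2 * R) - ‖y‖ ^ 2 / (2 * n * R ^ 3) := by
    filter_upwards [continuous_norm.continuousAt.eventually (Iio_mem_nhds hxR),
      isOpen_ne.mem_nhds hx] with y hyR hy using lap_phiR_of_norm_lt M hy hyR
  rw [pdR_congr_of_eventuallyEq hlap]
  refine pdR_comp_norm (f := fun r : ℝ =>
    (n - 1) * M / r + 1 / (2 * R) - r ^ 2 / (2 * n * R ^ 3)) hx ?_ k
  simp only [div_eq_mul_inv ((n - 1) * M)]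
  refine ((((hasDerivAt_inv hx').const_mul ((n - 1) * M)).add_const (1 / (2 * R))).sub
    ((hasDerivAt_pow 2 ‖x‖).div_const (2 * n * R ^ 3))).congr_deriv ?_
  simp only [mul_neg, Nat.cast_ofNat, Nat.add_one_sub_one, pow_one]
  ring

lemma pdR_lap_phiR_of_lt_norm (hR : 0 < R) (hxR : R < ‖x‖) (k : Fin n) :
    pdR (lap (phiR n M R)) k x
      = -((n - 1) * (M + 1 / (2 * n)) / ‖x‖ ^ 2) / ‖x‖ * x k := by
  have hx' : ‖x‖ ≠ 0 := (hR.trans hxR).ne'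
  have hlap : lap (phiR n M R) =ᶠ[𝓝 x] fun y => (n - 1) * (M + 1 / (2 * n)) / ‖y‖ := by
    filter_upwards [continuous_norm.continuousAt.eventually (Ioi_mem_nhds hxR)]
      with y hy using lap_phiR_of_lt_norm M hR hy
  rw [pdR_congr_of_eventuallyEq hlap]
  refine pdR_comp_norm (f := fun r : ℝ => (n - 1) * (M + 1 / (2 * n)) / r)
    (norm_ne_zero_iff.1 hx') ?_ k
  simp only [div_eq_mul_inv ((n - 1) * (M + 1 / (2 * (n : ℝ))))]
  exact ((hasDerivAt_inv hx').const_mul _).congr_deriv (mul_neg _ _)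

end Multiplier

section PolarCoordinates

open Set Metric
open Module (finrank)

variable {E F : Type*} [NormedAddCommGroup E] [NormedSpace ℝ E] [FiniteDimensional ℝ E]
  [MeasurableSpace E] [BorelSpace E] [NormedAddCommGroup F] [NormedSpace ℝ F]
  (μ : Measure E) [μ.IsAddHaarMeasure]

lemma integral_volumeIoiPow (n : ℕ) (f : ℝ → F) :
    ∫ r, f r ∂Measure.volumeIoiPow n = ∫ r in Ioi (0 : ℝ), r ^ n • f r := by
  simp only [Measure.volumeIoiPow, ENNReal.ofReal]
  rw [integral_withDensity_eq_integral_smul (measurable_subtype_coe.pow_const _).real_toNNReal,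
    ← integral_subtype_comap measurableSet_Ioi fun r : ℝ => r ^ n • f r]
  congr 1
  ext r
  rw [NNReal.smul_def, Real.coe_toNNReal _ (pow_nonneg r.2.out.le _)]

lemma integral_eq_integral_toSphere [Nontrivial E] {f : E → F} (hf : Integrable f μ) :
    ∫ x, f x ∂μ = ∫ ω : sphere (0 : E) 1,
      (∫ r in Ioi (0 : ℝ), r ^ (finrank ℝ E - 1) • f (r • (ω : E))) ∂μ.toSphere := by
  have hmp := μ.measurePreserving_homeomorphUnitSphereProd
  have hme := (homeomorphUnitSphereProd E).measurableEmbedding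
  let g : sphere (0 : E) 1 × Ioi (0 : ℝ) → F := fun p => f ((p.2 : ℝ) • (p.1 : E))
  have hg : g ∘ homeomorphUnitSphereProd E = fun x : ({0}ᶜ : Set E) => f x := by
    ext x
    simp [g, smul_smul, norm_ne_zero_iff.2 x.2]
  have hg_int : Integrable g (μ.toSphere.prod (Measure.volumeIoiPow (finrank ℝ E - 1))) := by
    rw [← hmp.integrable_comp_emb hme, hg]
    exact (integrableOn_iff_comap_subtypeVal (measurableSet_singleton 0).compl).1 hf.integrableOn
  calc ∫ x, f x ∂μ = ∫ x : ({0}ᶜ : Set E), f x ∂(μ.comap (↑)) := by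
        rw [integral_subtype_comap (measurableSet_singleton _).compl f, restrict_compl_singleton]
    _ = ∫ p, g p ∂(μ.toSphere.prod (Measure.volumeIoiPow (finrank ℝ E - 1))) := by
        rw [← hmp.integral_comp hme g, ← hg]
        rfl
    _ = _ := by
        rw [integral_prod _ hg_int]
        exact integral_congr_ae (.of_forall fun ω => integral_volumeIoiPow _ fun r => f (r • ω.1))

lemma locallyIntegrable_comp_norm_div_pow [Nontrivial E] {g : ℝ → ℝ}
    (hg : ∀ b, IntegrableOn g (Ioo 0 b)) :
    LocallyIntegrable (fun x : E => g ‖x‖ / ‖x‖ ^ (finrank ℝ E - 1)) μ := by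
  intro x
  have hball : IntegrableOn (fun y : E => g ‖y‖ / ‖y‖ ^ (finrank ℝ E - 1))
      (ball 0 (‖x‖ + 1)) μ := by
    rw [integrableOn_fun_norm_addHaar μ (f := fun r => g r / r ^ (finrank ℝ E - 1))]
    refine (hg (‖x‖ + 1)).congr_fun (fun r hr => ?_) measurableSet_Ioo
    have hr0 : r ≠ 0 := hr.1.ne'
    simp only [smul_eq_mul]
    field_simp
  exact ⟨_, isOpen_ball.mem_nhds (by simp), hball⟩

end PolarCoordinates

section RadialFlux

open Set Metric
open Module (finrank finrank_pos)

lemma integral_indicator_Iio_norm_div_pow_smul {E F : Type*} [NormedAddCommGroup E]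
    [MeasurableSpace E] [OpensMeasurableSpace E] [NormedAddCommGroup F] [NormedSpace ℝ F]
    (μ : Measure E) [NullSingletonClass μ] (m : ℕ) (c R : ℝ) (v : E → F) :
    ∫ x, ((Iio R).indicator (fun r => r ^ m / c) ‖x‖ / ‖x‖ ^ m) • v x ∂μ
      = (1 / c) • ∫ x in {x | ‖x‖ < R}, v x ∂μ := by
  rw [← integral_smul, ← integral_indicator (measurableSet_lt measurable_norm measurable_const)]
  refine integral_congr_ae ?_
  filter_upwards [Measure.ae_ne μ 0] with x hx
  by_cases hxR : ‖x‖ < R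
  · have hmem : x ∈ {x : E | ‖x‖ < R} := hxR
    rw [indicator_of_mem (mem_Iio.2 hxR), indicator_of_mem hmem, div_right_comm,
      div_self (pow_ne_zero m (norm_ne_zero_iff.2 hx))]
  · have hnotMem : x ∉ {x : E | ‖x‖ < R} := hxR
    rw [indicator_of_notMem (notMem_Iio.2 (not_lt.1 hxR)), indicator_of_notMem hnotMem, zero_div,
      zero_smul]

lemma integral_Ioi_smul_deriv_add_deriv_smul {F : Type*} [NormedAddCommGroup F] [NormedSpace ℝ F]
    [CompleteSpace F] {G g : ℝ → ℝ} {v : ℝ → F} {a : ℝ} (hG : ContinuousOn G (Ici a))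
    (hG' : ∀ r, a < r → HasDerivWithinAt G (g r) (Ioi r) r)
    (hg : ∀ b, IntegrableOn g (Ioo a b)) (hv : ContDiff ℝ 1 v) (hc : HasCompactSupport v) :
    ∫ r in Ioi a, (G r • deriv v r + g r • v r) = -(G a • v a) := by
  obtain ⟨b, hab, hb⟩ : ∃ b > a, ∀ r, b ≤ r → r ∉ tsupport v := by
    obtain ⟨b, hb⟩ := hc.isCompact.bddAbove
    exact ⟨max a b + 1, by grind, fun r hr hrv => by have := hb hrv; grind⟩
  have hvb : v b = 0 := image_eq_zero_of_notMem_tsupport (hb b le_rfl)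
  have hvanish : ∀ r ∈ Ioi a \ Ioc a b, G r • deriv v r + g r • v r = 0 := fun r hr => by
    have hrv : r ∉ tsupport v := hb r (by grind)
    rw [image_eq_zero_of_notMem_tsupport hrv,
      image_eq_zero_of_notMem_tsupport fun h => hrv (tsupport_deriv_subset h)]
    simp
  rw [setIntegral_eq_of_subset_of_forall_sdiff_eq_zero measurableSet_Ioi Ioc_subset_Ioi_self
      hvanish, ← intervalIntegral.integral_of_le hab.le]
  simp only [add_comm (G _ • deriv v _)]
  rw [intervalIntegral.integral_deriv_smul_eq_sub_of_hasDeriv_right (u := G)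
    (hG.mono (by grind [uIcc_of_le])) hv.continuous.continuousOn
    (fun r hr => hG' r (by grind))
    (fun r _ => (hv.differentiable one_ne_zero r).hasDerivAt.hasDerivWithinAt)
    ((intervalIntegrable_iff_integrableOn_Ioo_of_le hab.le).2 (hg b))
    ((hv.continuous_deriv le_rfl).intervalIntegrable _ _), hvb]
  simp

variable {E F : Type*} [NormedAddCommGroup E] [NormedSpace ℝ E] [FiniteDimensional ℝ E]
  [NormedAddCommGroup F] [NormedSpace ℝ F] {G g : ℝ → ℝ} {v : E → F}

lemma integral_ray_flux [CompleteSpace F] (hG : ContinuousOn G (Ici 0))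
    (hG' : ∀ r, 0 < r → HasDerivWithinAt G (g r) (Ioi r) r)
    (hg : ∀ b, IntegrableOn g (Ioo 0 b)) (hv : ContDiff ℝ 1 v) (hc : HasCompactSupport v)
    {ω : E} (hω : ‖ω‖ = 1) :
    ∫ r in Ioi (0 : ℝ), r ^ (finrank ℝ E - 1) •
        ((G ‖r • ω‖ / ‖r • ω‖ ^ finrank ℝ E) • fderiv ℝ v (r • ω) (r • ω)
          + (g ‖r • ω‖ / ‖r • ω‖ ^ (finrank ℝ E - 1)) • v (r • ω))
      = -(G 0 • v 0) := by
  have hω0 : ω ≠ 0 := norm_pos_iff.1 (by simp [hω])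
  have : Nontrivial E := nontrivial_of_ne ω 0 hω0
  have hline : ContDiff ℝ 1 fun r : ℝ => v (r • ω) := hv.comp (contDiff_id.smul contDiff_const)
  have hline_supp : HasCompactSupport fun r : ℝ => v (r • ω) :=
    hc.comp_isClosedEmbedding (isClosedEmbedding_smul_left hω0)
  have hderiv (r : ℝ) : deriv (fun r : ℝ => v (r • ω)) r = fderiv ℝ v (r • ω) ω := by
    have hsmul : HasDerivAt (fun r : ℝ => r • ω) ω r := by
      simpa using (hasDerivAt_id r).smul_const ω
    exact ((hv.differentiable one_ne_zero _).hasFDerivAt.comp_hasDerivAt r hsmul).deriv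
  have hparts := integral_Ioi_smul_deriv_add_deriv_smul hG hG' hg hline hline_supp
  rw [zero_smul] at hparts
  rw [← hparts]
  refine setIntegral_congr_fun measurableSet_Ioi fun r (hr : 0 < r) => ?_
  have hnorm : ‖r • ω‖ = r := by rw [norm_smul, hω, mul_one, Real.norm_of_nonneg hr.le]
  simp only [hderiv, hnorm, map_smul, smul_add, smul_smul]
  rw [← mul_pow_sub_one (finrank_pos (R := ℝ) (M := E)).ne' r]
  congr 2 <;> field_simp

variable [Nontrivial E] [MeasurableSpace E] [BorelSpace E] (μ : Measure E) [μ.IsAddHaarMeasure]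

lemma integrable_radial_smul_fderiv (hG : ContinuousOn G (Ici 0)) (hv : ContDiff ℝ 1 v)
    (hc : HasCompactSupport v) :
    Integrable (fun x => (G ‖x‖ / ‖x‖ ^ finrank ℝ E) • fderiv ℝ v x x) μ := by
  have hDv : Continuous (fderiv ℝ v) := hv.continuous_fderiv one_ne_zero
  have hG_int (b : ℝ) : IntegrableOn G (Ioo 0 b) :=
    (hG.mono Icc_subset_Ici_self).integrableOn_Icc.mono_set Ioo_subset_Icc_self
  have hbound : Integrable
      (fun x => (G ‖x‖ / ‖x‖ ^ (finrank ℝ E - 1)) • fderiv ℝ v x) μ :=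
    (locallyIntegrable_comp_norm_div_pow μ hG_int).integrable_smul_right_of_hasCompactSupport
      hDv (hc.fderiv ℝ)
  have hG_norm : Continuous fun x : E => G ‖x‖ :=
    hG.comp_continuous continuous_norm fun x => norm_nonneg x
  refine hbound.mono ?_ (.of_forall fun x => ?_)
  · exact (hG_norm.measurable.div (measurable_norm.pow_const _)).aestronglyMeasurable.smul
      (hDv.clm_apply continuous_id).aestronglyMeasurable
  · rcases eq_or_ne x 0 with rfl | hx
    · simp
    calc ‖(G ‖x‖ / ‖x‖ ^ finrank ℝ E) • fderiv ℝ v x x‖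
        ≤ ‖G ‖x‖ / ‖x‖ ^ finrank ℝ E‖ * (‖fderiv ℝ v x‖ * ‖x‖) := by
          rw [norm_smul]
          gcongr
          exact (fderiv ℝ v x).le_opNorm x
      _ = ‖(G ‖x‖ / ‖x‖ ^ (finrank ℝ E - 1)) • fderiv ℝ v x‖ := by
          rw [norm_smul, norm_div, norm_div, norm_pow, norm_pow, norm_norm,
            ← mul_pow_sub_one (finrank_pos (R := ℝ) (M := E)).ne' ‖x‖]
          field_simp

lemma integrable_radial_smul (hg : ∀ b, IntegrableOn g (Ioo 0 b)) (hv : Continuous v)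
    (hc : HasCompactSupport v) :
    Integrable (fun x => (g ‖x‖ / ‖x‖ ^ (finrank ℝ E - 1)) • v x) μ :=
  (locallyIntegrable_comp_norm_div_pow μ hg).integrable_smul_right_of_hasCompactSupport hv hc

theorem integral_radial_smul_fderiv [CompleteSpace F] (hG : ContinuousOn G (Ici 0))
    (hG' : ∀ r, 0 < r → HasDerivWithinAt G (g r) (Ioi r) r)
    (hg : ∀ b, IntegrableOn g (Ioo 0 b)) (hv : ContDiff ℝ 1 v) (hc : HasCompactSupport v) :
    ∫ x, (G ‖x‖ / ‖x‖ ^ finrank ℝ E) • fderiv ℝ v x x ∂μ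
      = -(∫ x, (g ‖x‖ / ‖x‖ ^ (finrank ℝ E - 1)) • v x ∂μ)
        - (finrank ℝ E * μ.real (ball 0 1)) • G 0 • v 0 := by
  have hGv := integrable_radial_smul_fderiv μ hG hv hc
  have hgv := integrable_radial_smul μ hg hv.continuous hc
  have hsum := integral_eq_integral_toSphere μ (hGv.add hgv)
  simp only [Pi.add_apply] at hsum
  simp only [integral_ray_flux hG hG' hg hv hc (norm_eq_of_mem_sphere _), integral_const,
    μ.toSphere_real_apply_univ, integral_add hGv hgv, smul_neg] at hsum
  rw [eq_sub_of_add_eq hsum]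
  abel

end RadialFlux

section DimensionThree

open Set Metric Topology

/-- The flux profile `G(r) = -r² ∂ᵣ(Δφ_R)` in dimension three: the flux of `-∇(Δφ_R)` through the
sphere of radius `r` is `4π G(r)`. The inner and outer formulas are joined by `min r R`, which makes
`G` continuous at `r = R`, where `∂ᵣ(Δφ_R)` itself is not defined. -/
def bilapFlux (M R r : ℝ) : ℝ := 2 * M + min r R ^ 3 / (3 * R ^ 3)

lemma continuous_bilapFlux (M R : ℝ) : Continuous (bilapFlux M R) := by
  unfold bilapFlux
  fun_prop

lemma hasDerivWithinAt_bilapFlux (M R r : ℝ) :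
    HasDerivWithinAt (bilapFlux M R) ((Iio R).indicator (fun s => s ^ 2 / R ^ 3) r) (Ioi r) r := by
  rcases lt_or_ge r R with hr | hr
  · have hinner : bilapFlux M R =ᶠ[𝓝 r] fun s => 2 * M + s ^ 3 / (3 * R ^ 3) := by
      filter_upwards [Iio_mem_nhds hr] with s hs
      rw [bilapFlux, min_eq_left hs.le]
    rw [indicator_of_mem (mem_Iio.2 hr)]
    refine (HasDerivAt.congr_of_eventuallyEq ?_ hinner).hasDerivWithinAt
    refine (((hasDerivAt_pow 3 r).div_const (3 * R ^ 3)).const_add (2 * M)).congr_deriv ?_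
    simp only [Nat.cast_ofNat, Nat.add_one_sub_one]
    field_simp
  · rw [indicator_of_notMem (notMem_Iio.2 hr)]
    refine (hasDerivWithinAt_const r _ (2 * M + R ^ 3 / (3 * R ^ 3))).congr (fun s hs => ?_) ?_
    · rw [bilapFlux, min_eq_right (hr.trans hs.le)]
    · rw [bilapFlux, min_eq_right hr]

lemma pdR_lap_phiR_three (M : ℝ) {R : ℝ} (hR : 0 < R) {x : EuclideanSpace ℝ (Fin 3)} (hx : x ≠ 0)
    (hxR : ‖x‖ ≠ R) (k : Fin 3) :
    pdR (lap (phiR 3 M R)) k x = -(bilapFlux M R ‖x‖ / ‖x‖ ^ 3) * x k := by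
  have hx' : ‖x‖ ≠ 0 := norm_ne_zero_iff.2 hx
  rcases hxR.lt_or_gt with h | h
  · rw [pdR_lap_phiR_of_norm_lt M hx h, bilapFlux, min_eq_left h.le]
    push_cast
    field_simp
    ring
  · rw [pdR_lap_phiR_of_lt_norm M hR h, bilapFlux, min_eq_right h.le]
    push_cast
    field_simp
    ring

lemma sum_pdR_lap_phiR_mul_pdR_ae_eq (M : ℝ) {R : ℝ} (hR : 0 < R)
    (v : EuclideanSpace ℝ (Fin 3) → ℝ) :
    (fun x => ∑ k, pdR (lap (phiR 3 M R)) k x * pdR v k x)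
      =ᵐ[volume] fun x => -((bilapFlux M R ‖x‖ / ‖x‖ ^ 3) * fderiv ℝ v x x) := by
  have hsphere : ∀ᵐ x : EuclideanSpace ℝ (Fin 3), x ∉ sphere (0 : EuclideanSpace ℝ (Fin 3)) R :=
    measure_eq_zero_iff_ae_notMem.1 (Measure.addHaar_sphere volume 0 R)
  filter_upwards [Measure.ae_ne volume 0, hsphere] with x hx hxR
  simp only [pdR_lap_phiR_three M hR hx (by simpa using hxR), neg_mul, mul_assoc,
    Finset.sum_neg_distrib, ← Finset.mul_sum, sum_mul_pdR]

lemma volume_real_unitBall_three :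
    volume.real (ball (0 : EuclideanSpace ℝ (Fin 3)) 1) = 4 / 3 * Real.pi := by
  rw [Measure.real, EuclideanSpace.volume_ball_fin_three, ENNReal.toReal_mul,
    ENNReal.toReal_ofReal (by positivity)]
  simp only [ENNReal.ofReal_one, one_pow, ENNReal.toReal_one, one_mul]
  ring

theorem distributional_bilap_identity_dim_three_general (M : ℝ) {R : ℝ} (hR : 0 < R)
    {v : EuclideanSpace ℝ (Fin 3) → ℝ} (hv : ContDiff ℝ 1 v) (hc : HasCompactSupport v) :
    ∫ x, ∑ k, pdR (lap (phiR 3 M R)) k x * pdR v k x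
      = (1 / R ^ 3) * (∫ x in {x | ‖x‖ < R}, v x) + 8 * Real.pi * M * v 0 := by
  have hg (b : ℝ) : IntegrableOn ((Iio R).indicator fun r => r ^ 2 / R ^ 3) (Ioo 0 b) :=
    ((Continuous.integrableOn_Icc (by fun_prop)).mono_set Ioo_subset_Icc_self).indicator
      measurableSet_Iio
  have hflux := integral_radial_smul_fderiv volume (continuous_bilapFlux M R).continuousOn
    (fun r _ => hasDerivWithinAt_bilapFlux M R r) hg hv hc
  have hG0 : bilapFlux M R 0 = 2 * M := by simp [bilapFlux, hR.le]
  rw [finrank_euclideanSpace_fin, integral_indicator_Iio_norm_div_pow_smul,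
    volume_real_unitBall_three, hG0] at hflux
  simp only [smul_eq_mul] at hflux
  rw [integral_congr_ae (sum_pdR_lap_phiR_mul_pdR_ae_eq M hR v), integral_neg, hflux]
  push_cast
  ring

end DimensionThree

/-- Distributional bilaplacian identity in dimension three:
`∫ ∇(Δφ_R)·∇(|u|²) = (1/R³)∫_{|x|<R} |u|² + 8πM |u(0)|²`. -/
theorem distributional_bilap_identity_dim_three
    (M : ℝ) (hM : 1 ≤ M) (R : ℝ) (hR : 0 < R)
    (u : EuclideanSpace ℝ (Fin 3) → ℂ) (hu : ContDiff ℝ (⊤ : ℕ∞) u) (hcs : HasCompactSupport u) :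
    ∫ x : EuclideanSpace ℝ (Fin 3),
        ∑ k, pdR (lap (phiR 3 M R)) k x * pdR (fun y => ‖u y‖ ^ 2) k x
      = (1 / R ^ 3) * (∫ x in {x : EuclideanSpace ℝ (Fin 3) | ‖x‖ < R}, ‖u x‖ ^ 2)
        + 8 * Real.pi * M * ‖u 0‖ ^ 2 := by
  exact distributional_bilap_identity_dim_three_general M hR
    ((hu.of_le (by exact_mod_cast le_top)).norm_sq ℝ)
    (hcs.comp_left (g := fun z : ℂ => ‖z‖ ^ 2) (by simp))
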